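/- Under assumption (B2), let (wₙ)ₙ be a sequence of words in 𝒲 with |wₙ| → ∞. Then the limit lim_{n→∞} k(u,wₙ) exists for every u ∈ 𝒲 if and only if the limit lim_{n→∞} k_hom(u,wₙ) exists for every u ∈ 𝒲. (In particular, every ρ-Cauchy sequence is a ρ_hom-Cauchy sequence and vice versa.) -/

import Mathlib

open Classical

namespace Martin

/-- Finite words over the alphabet `Fin N` (the empty list is the empty word `∅`;
`w ++ [i]` is the word `wi` and `w.dropLast` is the parent `w⁻`). -/
abbrev Word (N : ℕ) := List (Fin N)

/-- The mass of a word: `m(w₁⋯wₙ) = m(w₁)⋯m(wₙ)`, `m(∅) = 1`. -/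
noncomputable def mW {N : ℕ} (m : Fin N → ℝ) (w : Word N) : ℝ := (w.map m).prod

/-- Total mass of the equivalence class of `v`: `Σ_{v̂ ∼ v} m(v̂)`. -/
noncomputable def massCl {N : ℕ} (sim : Word N → Word N → Prop) (m : Fin N → ℝ)
    (v : Word N) : ℝ :=
  ∑ᶠ u ∈ {u : Word N | sim u v}, mW m u

/-- Transition probability: `p(v,w) = m(w)/(Σ_{v̂∼v} m(v̂))` if `w = v̂i` for some
`v̂ ∼ v`, `i ∈ 𝒜`, and `0` otherwise. -/
noncomputable def pTrans {N : ℕ} (sim : Word N → Word N → Prop) (m : Fin N → ℝ)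
    (v w : Word N) : ℝ :=
  if ∃ v' : Word N, ∃ i : Fin N, sim v' v ∧ w = v' ++ [i] then mW m w / massCl sim m v
  else 0

/-- `n`-step transition probabilities: `p₀(v,w) = δ_v(w)`,
`pₙ(v,w) = Σ_u pₙ₋₁(v,u) p(u,w)`. -/
noncomputable def pn {N : ℕ} (sim : Word N → Word N → Prop) (m : Fin N → ℝ) :
    ℕ → Word N → Word N → ℝ
  | 0, v, w => if w = v then 1 else 0
  | n + 1, v, w => ∑ᶠ u : Word N, pn sim m n v u * pTrans sim m u w

/-- The Green function `g(v,w) = p_{|w|−|v|}(v,w)` (it equals `0` when `|w| < |v|`,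
by truncated subtraction and since then `v ≠ w`). -/
noncomputable def green {N : ℕ} (sim : Word N → Word N → Prop) (m : Fin N → ℝ)
    (v w : Word N) : ℝ :=
  pn sim m (w.length - v.length) v w

/-- The function `q(v,w) = g(v,w)·(Σ_{v̂∼v} m(v̂))/m(w)` for `v ≠ w`, `q(v,v) = 1`. -/
noncomputable def qfun {N : ℕ} (sim : Word N → Word N → Prop) (m : Fin N → ℝ)
    (v w : Word N) : ℝ :=
  if v = w then 1 else green sim m v w * massCl sim m v / mW m w

/-- The Martin kernel `k(v,w) = g(v,w)/g(∅,w)`. -/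
noncomputable def mkernel {N : ℕ} (sim : Word N → Word N → Prop) (m : Fin N → ℝ)
    (v w : Word N) : ℝ :=
  green sim m v w / green sim m [] w

/-- `R(w)`: the number of words equivalent to `w`. -/
noncomputable def Rnum {N : ℕ} (sim : Word N → Word N → Prop) (w : Word N) : ℕ :=
  Set.ncard {u : Word N | sim u w}

/-- Assumption (B2): for every word `w`, either all equivalent words have the same mass,
or all equivalent words have equivalent parents. -/
def B2 {N : ℕ} (sim : Word N → Word N → Prop) (m : Fin N → ℝ) : Prop :=
  ∀ w : Word N, (∀ w', sim w' w → mW m w' = mW m w) ∨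
    (∀ w', sim w' w → sim w'.dropLast w.dropLast)


/-- Finset version of the equivalence class of a word. -/
noncomputable def clF {N : ℕ} (sim : Word N → Word N → Prop)
    (hlen : ∀ v w : Word N, sim v w → v.length = w.length) (x : Word N) : Finset (Word N) :=
  ((List.finite_length_eq (Fin N) x.length).subset
    (fun u (hu : sim u x) => hlen u x hu) : {u : Word N | sim u x}.Finite).toFinset

theorem mem_clF {N : ℕ} (sim : Word N → Word N → Prop)
    (hlen : ∀ v w : Word N, sim v w → v.length = w.length) (x u : Word N) :
    u ∈ clF sim hlen x ↔ sim u x := by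
  simp [clF]

/-- The mass independent part of the Green function. -/
noncomputable def Qf {N : ℕ} (sim : Word N → Word N → Prop)
    (hlen : ∀ v w : Word N, sim v w → v.length = w.length) : ℕ → Word N → Word N → ℝ
  | 0, v, w => if w ≠ [] ∧ sim w.dropLast v then 1 else 0
  | n + 1, v, w => if w = [] then 0 else
      (∑ u ∈ clF sim hlen w.dropLast, Qf sim hlen n v u) / (clF sim hlen w.dropLast).card

theorem Qf_congr {N : ℕ} (sim : Word N → Word N → Prop) (hsim : Equivalence sim)
    (hlen : ∀ v w : Word N, sim v w → v.length = w.length) (n : ℕ) (v w w' : Word N)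
    (h0 : w = [] ↔ w' = []) (h : sim w.dropLast w'.dropLast) :
    Qf sim hlen n v w = Qf sim hlen n v w' := by
  cases n with
  | zero =>
    have : sim w.dropLast v ↔ sim w'.dropLast v :=
      ⟨fun k => hsim.trans (hsim.symm h) k, fun k => hsim.trans h k⟩
    simp only [Qf, ne_eq, h0, this]
  | succ n =>
    have : clF sim hlen w.dropLast = clF sim hlen w'.dropLast := by
      ext u
      rw [mem_clF, mem_clF]
      exact ⟨fun k => hsim.trans k h, fun k => hsim.trans k (hsim.symm h)⟩
    simp only [Qf, h0, this]

theorem mW_pos {N : ℕ} (m : Fin N → ℝ) (hm : ∀ a, 0 < m a) (w : Word N) : 0 < mW m w := by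
  unfold mW
  apply List.prod_pos
  intro a ha
  obtain ⟨b, -, rfl⟩ := List.mem_map.1 ha
  exact hm b

theorem massCl_eq {N : ℕ} (sim : Word N → Word N → Prop)
    (hlen : ∀ v w : Word N, sim v w → v.length = w.length) (m : Fin N → ℝ) (x : Word N) :
    massCl sim m x = ∑ u ∈ clF sim hlen x, mW m u := by
  unfold massCl
  apply finsum_mem_eq_finite_toFinset_sum

theorem massCl_pos {N : ℕ} (sim : Word N → Word N → Prop) (hsim : Equivalence sim)
    (hlen : ∀ v w : Word N, sim v w → v.length = w.length) (m : Fin N → ℝ)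
    (hm : ∀ a, 0 < m a) (x : Word N) : 0 < massCl sim m x := by
  rw [massCl_eq sim hlen]
  exact Finset.sum_pos (fun u _ => mW_pos m hm u) ⟨x, (mem_clF _ _ _ _).2 (hsim.refl x)⟩

theorem massCl_congr {N : ℕ} (sim : Word N → Word N → Prop) (hsim : Equivalence sim)
    (m : Fin N → ℝ) (x y : Word N) (h : sim x y) : massCl sim m x = massCl sim m y := by
  have : {u : Word N | sim u x} = {u : Word N | sim u y} := by
    ext u
    exact ⟨fun k => hsim.trans k h, fun k => hsim.trans k (hsim.symm h)⟩
  unfold massCl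
  rw [this]

theorem pTrans_nil {N : ℕ} (sim : Word N → Word N → Prop) (m : Fin N → ℝ) (v : Word N) :
    pTrans sim m v [] = 0 := by
  simp [pTrans]

theorem pTrans_snoc {N : ℕ} (sim : Word N → Word N → Prop) (hsim : Equivalence sim)
    (m : Fin N → ℝ) (v x : Word N) (i : Fin N) :
    pTrans sim m v (x ++ [i]) = if sim v x then mW m (x ++ [i]) / massCl sim m x else 0 := by
  unfold pTrans
  by_cases h : sim v x
  · rw [if_pos ⟨x, i, hsim.symm h, rfl⟩, if_pos h, massCl_congr sim hsim m v x h]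
  · rw [if_neg, if_neg h]
    rintro ⟨v', j, h1, h2⟩
    obtain ⟨rfl, -⟩ := List.append_inj' h2 rfl
    exact h (hsim.symm h1)

theorem finsum_snoc {N : ℕ} (sim : Word N → Word N → Prop) (hsim : Equivalence sim)
    (hlen : ∀ v w : Word N, sim v w → v.length = w.length)
    (m : Fin N → ℝ) (f : Word N → ℝ) (x : Word N) (i : Fin N) :
    ∑ᶠ u : Word N, f u * pTrans sim m u (x ++ [i]) =
      (∑ u ∈ clF sim hlen x, f u) * (mW m (x ++ [i]) / massCl sim m x) := by
  rw [finsum_eq_sum_of_support_subset (s := clF sim hlen x), Finset.sum_mul]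
  · apply Finset.sum_congr rfl
    intro u hu
    rw [pTrans_snoc sim hsim, if_pos ((mem_clF _ _ _ _).1 hu)]
  · intro u hu
    rw [Finset.mem_coe, mem_clF]
    by_contra h
    apply hu
    simp only [pTrans_snoc sim hsim, if_neg h, mul_zero]

theorem pn_eq {N : ℕ} (sim : Word N → Word N → Prop) (hsim : Equivalence sim)
    (hlen : ∀ v w : Word N, sim v w → v.length = w.length) (m : Fin N → ℝ)
    (hm : ∀ a, 0 < m a) (hB2 : B2 sim m) (n : ℕ) (v w : Word N) :
    pn sim m (n + 1) v w = mW m w / massCl sim m v * Qf sim hlen n v w := by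
  induction n generalizing w with
  | zero =>
    rcases List.eq_nil_or_concat w with rfl | ⟨x, i, rfl⟩
    · simp [pn, pTrans_nil, Qf]
    · rw [List.concat_eq_append, pn, finsum_snoc sim hsim hlen]
      simp only [pn, Finset.sum_ite_eq', mem_clF, Qf, List.dropLast_concat]
      by_cases h : sim v x
      · have h' := hsim.symm h
        simp [h, h', massCl_congr sim hsim m v x h]
      · have h' : ¬ sim x v := fun k => h (hsim.symm k)
        simp [h, h']
  | succ n ih =>
    rcases List.eq_nil_or_concat w with rfl | ⟨x, i, rfl⟩
    · simp [pn, pTrans_nil, Qf]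
    · rw [List.concat_eq_append, pn, finsum_snoc sim hsim hlen]
      have hx : (x ++ [i] : Word N) ≠ [] := by simp
      rw [Qf, if_neg hx, List.dropLast_concat]
      simp only [ih]
      have hMx := (massCl_pos sim hsim hlen m hm x).ne'
      have hMv := (massCl_pos sim hsim hlen m hm v).ne'
      have hc : ((clF sim hlen x).card : ℝ) ≠ 0 := by
        have : x ∈ clF sim hlen x := (mem_clF _ _ _ _).2 (hsim.refl x)
        exact_mod_cast (Finset.card_pos.2 ⟨x, this⟩).ne'
      have key : ∑ u ∈ clF sim hlen x, mW m u * Qf sim hlen n v u =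
          massCl sim m x * ((∑ u ∈ clF sim hlen x, Qf sim hlen n v u) /
            (clF sim hlen x).card) := by
        rw [massCl_eq sim hlen]
        rcases hB2 x with h | h
        · have e : ∀ u ∈ clF sim hlen x, mW m u = mW m x :=
            fun u hu => h u ((mem_clF _ _ _ _).1 hu)
          rw [Finset.sum_congr rfl e, Finset.sum_congr rfl (fun u hu => by rw [e u hu]),
            ← Finset.mul_sum, Finset.sum_const, nsmul_eq_mul]
          field_simp
        · have e : ∀ u ∈ clF sim hlen x, Qf sim hlen n v u = Qf sim hlen n v x := by
            intro u hu
            have hu' := (mem_clF _ _ _ _).1 hu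
            apply Qf_congr sim hsim hlen _ _ _ _ _ (h u hu')
            rw [← List.length_eq_zero_iff, ← List.length_eq_zero_iff, hlen u x hu']
          rw [Finset.sum_congr rfl e, Finset.sum_congr rfl (fun u hu => by rw [e u hu]),
            ← Finset.sum_mul, Finset.sum_const, nsmul_eq_mul]
          field_simp
      have e2 : ∑ u ∈ clF sim hlen x, mW m u / massCl sim m v * Qf sim hlen n v u =
          (∑ u ∈ clF sim hlen x, mW m u * Qf sim hlen n v u) / massCl sim m v := by
        rw [Finset.sum_div]
        exact Finset.sum_congr rfl (fun u _ => by ring)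
      rw [e2, key]
      field_simp

theorem mkernel_eq {N : ℕ} (sim : Word N → Word N → Prop) (hsim : Equivalence sim)
    (hlen : ∀ v w : Word N, sim v w → v.length = w.length) (m : Fin N → ℝ)
    (hm : ∀ a, 0 < m a) (hB2 : B2 sim m) (v w : Word N) (h : v.length < w.length) :
    mkernel sim m v w = massCl sim m [] / massCl sim m v *
      (Qf sim hlen (w.length - v.length - 1) v w / Qf sim hlen (w.length - 1) [] w) := by
  have e1 : w.length - v.length = (w.length - v.length - 1) + 1 := by omega
  have e2 : w.length - ([] : Word N).length = (w.length - 1) + 1 := by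
    simp only [List.length_nil]; omega
  unfold mkernel green
  rw [e2, pn_eq sim hsim hlen m hm hB2, e1, pn_eq sim hsim hlen m hm hB2]
  simp only [Nat.add_sub_cancel]
  have hMx := (massCl_pos sim hsim hlen m hm []).ne'
  have hMv := (massCl_pos sim hsim hlen m hm v).ne'
  have hw := (mW_pos m hm w).ne'
  by_cases hq : Qf sim hlen (w.length - 1) [] w = 0
  · simp [hq]
  · field_simp

theorem conv_iff {N : ℕ} (sim : Word N → Word N → Prop) (hsim : Equivalence sim)
    (hlen : ∀ v w : Word N, sim v w → v.length = w.length) (m : Fin N → ℝ)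
    (hm : ∀ a, 0 < m a) (hB2 : B2 sim m) (w : ℕ → Word N)
    (hw : Filter.Tendsto (fun n => (w n).length) Filter.atTop Filter.atTop) (u : Word N) :
    (∃ L : ℝ, Filter.Tendsto (fun n => mkernel sim m u (w n)) Filter.atTop (nhds L)) ↔
    (∃ L : ℝ, Filter.Tendsto (fun n => Qf sim hlen ((w n).length - u.length - 1) u (w n) /
      Qf sim hlen ((w n).length - 1) [] (w n)) Filter.atTop (nhds L)) := by
  have hev : ∀ᶠ n in Filter.atTop, u.length < (w n).length :=
    hw.eventually (Filter.eventually_gt_atTop _)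
  have hc : massCl sim m [] / massCl sim m u ≠ 0 :=
    (div_pos (massCl_pos sim hsim hlen m hm []) (massCl_pos sim hsim hlen m hm u)).ne'
  constructor
  · rintro ⟨L, hL⟩
    refine ⟨(massCl sim m [] / massCl sim m u)⁻¹ * L, (hL.const_mul _).congr' ?_⟩
    filter_upwards [hev] with n hn
    rw [mkernel_eq sim hsim hlen m hm hB2 u (w n) hn, inv_mul_cancel_left₀ hc]
  · rintro ⟨L, hL⟩
    refine ⟨(massCl sim m [] / massCl sim m u) * L, (hL.const_mul _).congr' ?_⟩
    filter_upwards [hev] with n hn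
    rw [mkernel_eq sim hsim hlen m hm hB2 u (w n) hn]

/-- Lemma 5.2: under (B2), for a sequence of words with lengths tending
to infinity, the limits `lim_n k(u,wₙ)` exist for all `u` iff the limits
`lim_n k_hom(u,wₙ)` exist for all `u`. -/
theorem cauchy_iff_cauchy_hom {N : ℕ} (hN : 2 ≤ N)
    (sim : Word N → Word N → Prop) (hsim : Equivalence sim)
    (hlen : ∀ v w : Word N, sim v w → v.length = w.length)
    (m : Fin N → ℝ) (hm : ∀ a, m a ∈ Set.Ioo (0 : ℝ) 1)
    (hm1 : ∑ a, m a = 1) (hB2 : B2 sim m) :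
    ∀ w : ℕ → Word N,
      Filter.Tendsto (fun n => (w n).length) Filter.atTop Filter.atTop →
      ((∀ u : Word N, ∃ L : ℝ,
          Filter.Tendsto (fun n => mkernel sim m u (w n)) Filter.atTop (nhds L)) ↔
       (∀ u : Word N, ∃ L : ℝ,
          Filter.Tendsto (fun n => mkernel sim (fun _ : Fin N => (N : ℝ)⁻¹) u (w n))
            Filter.atTop (nhds L))) := by
  intro w hw
  have hB : B2 sim (fun _ : Fin N => (N : ℝ)⁻¹) := by
    intro x
    left
    intro y hy
    simp [mW, hlen y x hy]
  have hp : ∀ a : Fin N, 0 < (fun _ : Fin N => (N : ℝ)⁻¹) a := by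
    intro a
    have : (0 : ℝ) < N := by exact_mod_cast (by omega : 0 < N)
    exact inv_pos.2 this
  refine forall_congr' fun u => ?_
  rw [conv_iff sim hsim hlen m (fun a => (hm a).1) hB2 w hw u,
    conv_iff sim hsim hlen _ hp hB w hw u]

end Martin
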